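/- An element f·y₁y₂y₃ of R with f ∈ S is fixed by G if and only if f ∈ S^G, and the G-invariant 3-forms {f·y₁y₂y₃ : f ∈ S} ∩ R^G form a free A-module with basis {y₁y₂y₃, b·y₁y₂y₃}. -/

import Mathlib

open Matrix MvPolynomial

set_option synthInstance.maxHeartbeats 1000000
set_option maxHeartbeats 1000000

abbrev F3 : Type := ZMod 3
abbrev G3 : Type := Matrix.SpecialLinearGroup (Fin 2) F3
abbrev S3 : Type := MvPolynomial (Fin 3) F3

/-- The fixed basis `v₁, v₂, v₃` of the traceless `2 × 2` matrices over `𝔽₃`. -/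
def V : Fin 3 → Matrix (Fin 2) (Fin 2) F3 :=
  ![!![0, 1; -1, 0], !![-1, -1; -1, 1], !![1, -1; -1, -1]]

/-- Coordinates of a traceless matrix with respect to the basis `v₁, v₂, v₃`. -/
def coordM : Fin 3 → Matrix (Fin 2) (Fin 2) F3 → F3 :=
  ![fun X => X 1 0 - X 0 1, fun X => X 0 0 - X 0 1 - X 1 0, fun X => -(X 0 0 + X 0 1 + X 1 0)]

/-- Matrix of the (dual) action of `g` on `M*`: `g • x_s = ∑ r, (rep g) s r • x_r`, where
`(rep g) s r = x_s (g⁻¹ • v_r) = coordM s (g⁻¹ vᵣ g)`, coming from `(g • f)(v) = f(g⁻¹ • v)`. -/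
def rep (g : G3) : Matrix (Fin 3) (Fin 3) F3 :=
  Matrix.of fun s r => coordM s ((g⁻¹ : G3) * V r * (g : Matrix (Fin 2) (Fin 2) F3))

/-- The action of `g ∈ SL₂(𝔽₃)` on `S = 𝔽₃[x₁,x₂,x₃]` by algebra automorphisms, given by
substituting `x_s ↦ g • x_s = ∑ r, (rep g) s r • x_r`. -/
noncomputable def actS (g : G3) : S3 →ₐ[F3] S3 :=
  MvPolynomial.aeval fun s => ∑ r : Fin 3, rep g s r • MvPolynomial.X r

noncomputable def a1 : S3 := X 0 ^ 2 + X 1 ^ 2 + X 2 ^ 2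
noncomputable def a2 : S3 := X 0 * X 1 * X 2
noncomputable def a3 : S3 := X 0 ^ 4 + X 1 ^ 4 + X 2 ^ 4
noncomputable def bP : S3 := X 0 ^ 4 * X 1 ^ 2 + X 0 ^ 2 * X 2 ^ 4 + X 1 ^ 4 * X 2 ^ 2
noncomputable def av : Fin 3 → S3 := ![a1, a2, a3]

def tm : G3 := ⟨!![1, 1; 0, 1], by decide⟩
def im : G3 := ⟨!![0, 1; -1, 0], by decide⟩
def jm : G3 := ⟨!![1, -1; -1, -1], by decide⟩

/-- The quaternion subgroup `H = ⟨i, j⟩ ≅ Q₈` of `SL₂(𝔽₃)`. -/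
def H3 : Subgroup G3 := Subgroup.closure {im, jm}

/-- The character with `χ(±e) = χ(±i) = 1` and `χ(±j) = χ(±k) = -1` (its values off the
set `{±e, ±i}` are `-1`; only the restriction to `H` is ever used). -/
def chi (g : G3) : F3 :=
  if (g : Matrix (Fin 2) (Fin 2) F3) = 1 ∨ (g : Matrix (Fin 2) (Fin 2) F3) = -1 ∨
     (g : Matrix (Fin 2) (Fin 2) F3) = (im : Matrix (Fin 2) (Fin 2) F3) ∨
     (g : Matrix (Fin 2) (Fin 2) F3) = -(im : Matrix (Fin 2) (Fin 2) F3) then 1 else -1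

/-- The `𝔽₃`-submodule `S^H_χ` of `χ`-relative `H`-invariants in `S`. -/
noncomputable def relInv : Submodule F3 S3 where
  carrier := {f | ∀ h ∈ H3, actS h f = chi h • f}
  add_mem' := by
    intro f g hf hg h hh
    rw [map_add, hf h hh, hg h hh, smul_add]
  zero_mem' := by
    intro h hh
    rw [map_zero, smul_zero]
  smul_mem' := by
    intro c f hf h hh
    rw [_root_.map_smul, hf h hh, smul_comm]

open TensorProduct

/-- The exterior algebra `Λ(M*)` on `y₁, y₂, y₃` (with `M*` in dual-basis coordinates). -/
abbrev Lam : Type := ExteriorAlgebra F3 (Fin 3 → F3)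

/-- `y_s = dx_s`, the exterior generators. -/
noncomputable def yy (s : Fin 3) : Lam := ExteriorAlgebra.ι F3 (Pi.single s 1)

/-- The linear action of `g` on the coordinate space of `y₁, y₂, y₃`:
`y_s ↦ ∑ r, (rep g) s r • y_r`. -/
noncomputable def repL (g : G3) : (Fin 3 → F3) →ₗ[F3] (Fin 3 → F3) :=
  Matrix.toLin' (rep g)ᵀ

/-- The algebra of differential forms `R = S ⊗ Λ(M*)`: the graded-commutative `𝔽₃`-algebra
generated by the central `x₁, x₂, x₃` and the anticommuting `y₁, y₂, y₃`. -/
abbrev Rf : Type := S3 ⊗[F3] Lam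

/-- The action of `g ∈ SL₂(𝔽₃)` on `R` by ring automorphisms, acting on `x`'s as on `S`
and on `y₁, y₂, y₃` by the same matrices as on `x₁, x₂, x₃`. -/
noncomputable def actR (g : G3) : Rf →ₐ[F3] Rf :=
  Algebra.TensorProduct.map (actS g) (ExteriorAlgebra.map (repL g))

noncomputable def c1 : Rf := X 0 ⊗ₜ[F3] yy 0 + X 1 ⊗ₜ[F3] yy 1 + X 2 ⊗ₜ[F3] yy 2
noncomputable def c2 : Rf :=
  (X 1 * X 2) ⊗ₜ[F3] yy 0 + (X 2 * X 0) ⊗ₜ[F3] yy 1 + (X 0 * X 1) ⊗ₜ[F3] yy 2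
noncomputable def c3 : Rf :=
  (X 0 ^ 3) ⊗ₜ[F3] yy 0 + (X 1 ^ 3) ⊗ₜ[F3] yy 1 + (X 2 ^ 3) ⊗ₜ[F3] yy 2
noncomputable def c4 : Rf :=
  (X 0 * X 1 ^ 2) ⊗ₜ[F3] yy 0 + (X 1 * X 2 ^ 2) ⊗ₜ[F3] yy 1 + (X 2 * X 0 ^ 2) ⊗ₜ[F3] yy 2
noncomputable def c5 : Rf :=
  (X 1 ^ 3 * X 2) ⊗ₜ[F3] yy 0 + (X 2 ^ 3 * X 0) ⊗ₜ[F3] yy 1 + (X 0 ^ 3 * X 1) ⊗ₜ[F3] yy 2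
noncomputable def c6 : Rf :=
  (X 0 ^ 3 * X 1 ^ 2) ⊗ₜ[F3] yy 0 + (X 1 ^ 3 * X 2 ^ 2) ⊗ₜ[F3] yy 1 +
    (X 2 ^ 3 * X 0 ^ 2) ⊗ₜ[F3] yy 2

noncomputable def d1 : Rf :=
  X 0 ⊗ₜ[F3] (yy 1 * yy 2) + X 1 ⊗ₜ[F3] (yy 2 * yy 0) + X 2 ⊗ₜ[F3] (yy 0 * yy 1)
noncomputable def d2 : Rf :=
  (X 1 * X 2) ⊗ₜ[F3] (yy 1 * yy 2) + (X 2 * X 0) ⊗ₜ[F3] (yy 2 * yy 0) +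
    (X 0 * X 1) ⊗ₜ[F3] (yy 0 * yy 1)
noncomputable def d3 : Rf :=
  (X 0 ^ 3) ⊗ₜ[F3] (yy 1 * yy 2) + (X 1 ^ 3) ⊗ₜ[F3] (yy 2 * yy 0) +
    (X 2 ^ 3) ⊗ₜ[F3] (yy 0 * yy 1)
noncomputable def d4 : Rf :=
  (X 0 * X 1 ^ 2) ⊗ₜ[F3] (yy 1 * yy 2) + (X 1 * X 2 ^ 2) ⊗ₜ[F3] (yy 2 * yy 0) +
    (X 2 * X 0 ^ 2) ⊗ₜ[F3] (yy 0 * yy 1)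
noncomputable def d5 : Rf :=
  (X 1 ^ 3 * X 2) ⊗ₜ[F3] (yy 1 * yy 2) + (X 2 ^ 3 * X 0) ⊗ₜ[F3] (yy 2 * yy 0) +
    (X 0 ^ 3 * X 1) ⊗ₜ[F3] (yy 0 * yy 1)
noncomputable def d6 : Rf :=
  (X 0 ^ 3 * X 1 ^ 2) ⊗ₜ[F3] (yy 1 * yy 2) + (X 1 ^ 3 * X 2 ^ 2) ⊗ₜ[F3] (yy 2 * yy 0) +
    (X 2 ^ 3 * X 0 ^ 2) ⊗ₜ[F3] (yy 0 * yy 1)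

/-- The top form `y₁y₂y₃`. -/
noncomputable def y123 : Lam := yy 0 * yy 1 * yy 2

/-- `Φ(p, q) = (p(a₁,a₂,a₃) + q(a₁,a₂,a₃)·b) · y₁y₂y₃`. -/
noncomputable def Phi13 (pq : MvPolynomial (Fin 3) F3 × MvPolynomial (Fin 3) F3) : Rf :=
  (aeval av pq.1 + aeval av pq.2 * bP) ⊗ₜ[F3] y123

/-- The four sign vectors with product `1`, i.e. the image of the quaternion group in `GL(M*)`. -/
def evenSigns : Fin 4 → Fin 3 → F3 :=
  ![![1, 1, 1], ![1, -1, -1], ![-1, 1, -1], ![-1, -1, 1]]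

/-- `G` acts on `M*` by cyclic permutations of the coordinates with an even number of signs. -/
theorem exists_rep_eq (g : G3) : ∃ (k : Fin 3) (i : Fin 4),
    rep g = Matrix.of fun s r => if r = s + k then evenSigns i s else 0 := by
  revert g
  decide +kernel

theorem exists_eq_rep (k : Fin 3) (i : Fin 4) : ∃ g : G3,
    rep g = Matrix.of fun s r => if r = s + k then evenSigns i s else 0 := by
  revert k i
  decide +kernel

theorem exists_actS_X (g : G3) : ∃ (k : Fin 3) (i : Fin 4),
    ∀ s, actS g (X s) = evenSigns i s • X (s + k) := by
  obtain ⟨k, i, h⟩ := exists_rep_eq g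
  exact ⟨k, i, fun s => by simp [actS, h]⟩

/-- The linear functional on `Λ(M*)` that is the determinant in degree 3 and zero elsewhere. -/
noncomputable def topCoeff : Lam →ₗ[F3] F3 :=
  ExteriorAlgebra.liftAlternating (R := F3) (M := Fin 3 → F3) (N := F3)
    (Pi.single 3 (Matrix.detRowAlternating (n := Fin 3) (R := F3)))

theorem y123_eq_ιMulti : y123 = ExteriorAlgebra.ιMulti F3 3 (fun s => Pi.single s 1) := by
  simp [y123, yy, ExteriorAlgebra.ιMulti_apply, mul_assoc, vecTail]

theorem topCoeff_y123 : topCoeff y123 = 1 := by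
  rw [y123_eq_ιMulti, topCoeff, ExteriorAlgebra.liftAlternating_apply_ιMulti, Pi.single_eq_same]
  decide

theorem tmul_y123_injective : Function.Injective fun f : S3 => (f ⊗ₜ[F3] y123 : Rf) := by
  intro f g h
  have := congrArg (TensorProduct.rid F3 S3 ∘ LinearMap.lTensor S3 topCoeff) h
  simpa [topCoeff_y123] using this

theorem map_y123 (g : G3) : ExteriorAlgebra.map (repL g) y123 = y123 := by
  obtain ⟨k, i, h⟩ := exists_rep_eq g
  have hv : (repL g ∘ fun s : Fin 3 => (Pi.single s 1 : Fin 3 → F3)) =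
      fun s => evenSigns i s •
        ((fun s : Fin 3 => (Pi.single s 1 : Fin 3 → F3)) ∘ Equiv.addRight k) s := by
    funext s r
    simp [repL, h, Pi.single_apply]
  have hε : ∀ i, ∏ s, evenSigns i s = 1 := by decide
  have hk : ∀ k : Fin 3, Equiv.Perm.sign (Equiv.addRight k) = 1 := by decide
  rw [y123_eq_ιMulti, ExteriorAlgebra.map_apply_ιMulti, hv]
  erw [MultilinearMap.map_smul_univ]
  rw [hε, one_smul]
  erw [AlternatingMap.map_perm]
  rw [hk, one_smul]

theorem actR_tmul_y123 (g : G3) (f : S3) : actR g (f ⊗ₜ[F3] y123) = actS g f ⊗ₜ[F3] y123 := by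
  rw [actR, Algebra.TensorProduct.map_tmul, map_y123]

theorem actS_av (g : G3) (s : Fin 3) : actS g (av s) = av s := by
  obtain ⟨k, i, h⟩ := exists_actS_X g
  fin_cases s <;> fin_cases k <;> fin_cases i <;>
    simp [av, a1, a2, a3, evenSigns, h] <;> ring

theorem actS_bP (g : G3) : actS g bP = bP := by
  obtain ⟨k, i, h⟩ := exists_actS_X g
  fin_cases k <;> fin_cases i <;> simp [bP, evenSigns, h] <;> ring

theorem X_sub_X_dvd_sub_bind₁_update {R σ : Type*} [CommRing R] [DecidableEq σ] (i j : σ)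
    (f : MvPolynomial σ R) :
    (X i - X j) ∣ f - bind₁ (Function.update X i (X j)) f := by
  rw [← Ideal.mem_span_singleton, ← Ideal.Quotient.mk_eq_mk_iff_sub_mem]
  have h : Ideal.Quotient.mkₐ R (Ideal.span {(X i - X j : MvPolynomial σ R)}) =
      (Ideal.Quotient.mkₐ R _).comp (bind₁ (Function.update X i (X j))) := by
    ext s
    rcases eq_or_ne s i with rfl | hs
    · simpa using (Ideal.Quotient.mk_eq_mk_iff_sub_mem _ _).2
        (Ideal.mem_span_singleton_self (X s - X j : MvPolynomial σ R))
    · simp [hs]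
  exact DFunLike.congr_fun h f

theorem X_sub_X_dvd_of_rename_swap {i j : Fin 3} {f : S3}
    (h : rename (Equiv.swap i j) f = -f) : (X i - X j) ∣ f := by
  have h1 := X_sub_X_dvd_sub_bind₁_update i j f
  have h2 := congrArg (bind₁ (Function.update X i (X j))) h
  have h3 : (Function.update X i (X j) : Fin 3 → S3) ∘ Equiv.swap i j =
      Function.update X i (X j) := by
    funext s
    rcases eq_or_ne s i with rfl | hi
    · by_cases hj : j = s <;> simp [hj]
    rcases eq_or_ne s j with rfl | hj
    · simp [hi]
    · simp [hi, Equiv.swap_apply_of_ne_of_ne hi hj]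
  rw [bind₁_rename, h3, map_neg, eq_neg_iff_add_eq_zero, ← two_mul] at h2
  have h4 : (2 : S3) ≠ 0 := by
    rw [← map_ofNat (C : F3 →+* S3) 2, Ne, C_eq_zero]
    decide
  rwa [(mul_eq_zero.1 h2).resolve_left h4, sub_zero] at h1

/-- The Vandermonde product in three variables. -/
noncomputable def vandermonde3 : S3 := (X 0 - X 1) * (X 1 - X 2) * (X 0 - X 2)

theorem X_sub_X_ne_zero {i j : Fin 3} (h : i ≠ j) : (X i - X j : S3) ≠ 0 :=
  sub_ne_zero.2 fun e => h (X_injective e)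

theorem vandermonde3_ne_zero : vandermonde3 ≠ 0 :=
  mul_ne_zero (mul_ne_zero (X_sub_X_ne_zero (by decide)) (X_sub_X_ne_zero (by decide)))
    (X_sub_X_ne_zero (by decide))

theorem X_sub_X_dvd_of_dvd_mul {i j : Fin 3} {f g : S3} (h : (X i - X j) ∣ f * g)
    (hf : bind₁ (Function.update X i (X j)) f ≠ 0) : (X i - X j) ∣ g := by
  obtain ⟨k, hk⟩ := h
  have h1 := congrArg (bind₁ (Function.update X i (X j))) hk
  rcases eq_or_ne i j with rfl | hij
  · simp_all
  have h2 : (bind₁ (Function.update X i (X j))) g = 0 := by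
    simpa [hij.symm, hf] using h1
  simpa [h2] using X_sub_X_dvd_sub_bind₁_update i j g

theorem vandermonde3_dvd {f : S3} (h01 : rename (Equiv.swap 0 1) f = -f)
    (h12 : rename (Equiv.swap 1 2) f = -f) (h02 : rename (Equiv.swap 0 2) f = -f) :
    vandermonde3 ∣ f := by
  obtain ⟨k, rfl⟩ := X_sub_X_dvd_of_rename_swap h01
  obtain ⟨l, rfl⟩ := X_sub_X_dvd_of_dvd_mul (X_sub_X_dvd_of_rename_swap h12) (by
    simpa using X_sub_X_ne_zero (by decide))
  have h := X_sub_X_dvd_of_rename_swap h02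
  rw [← mul_assoc] at h
  obtain ⟨m, rfl⟩ := X_sub_X_dvd_of_dvd_mul h (by
    simpa using ⟨X_sub_X_ne_zero (by decide), X_sub_X_ne_zero (by decide)⟩)
  exact ⟨m, by rw [vandermonde3]; ring⟩

theorem perm_fin_three_cases (e : Equiv.Perm (Fin 3)) :
    (∃ k, e = Equiv.addRight k ∧ Equiv.Perm.sign e = 1) ∨
      ∃ k, e = Equiv.swap 0 1 * Equiv.addRight k ∧ Equiv.Perm.sign e = -1 := by
  revert e
  decide

theorem rename_vandermonde3 (e : Equiv.Perm (Fin 3)) :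
    rename e vandermonde3 = (Equiv.Perm.sign e : ℤ) • vandermonde3 := by
  obtain ⟨k, rfl, h⟩ | ⟨k, rfl, h⟩ := perm_fin_three_cases e <;> rw [h] <;> fin_cases k <;>
    simp [vandermonde3, Equiv.swap_apply_def] <;> ring

theorem esymm_one_eq : esymm (Fin 3) F3 1 = X 0 + X 1 + X 2 := by
  rw [esymm_one, Fin.sum_univ_three]

theorem esymm_two_eq : esymm (Fin 3) F3 2 = X 0 * X 1 + X 0 * X 2 + X 1 * X 2 := by
  have h : Finset.powersetCard 2 (Finset.univ : Finset (Fin 3)) = {{0, 1}, {0, 2}, {1, 2}} := by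
    decide
  rw [esymm, h, Finset.sum_insert (by decide), Finset.sum_insert (by decide),
    Finset.sum_singleton]
  simp [add_assoc]

theorem esymm_three_eq : esymm (Fin 3) F3 3 = X 0 * X 1 * X 2 := by
  have h : Finset.powersetCard 3 (Finset.univ : Finset (Fin 3)) = {Finset.univ} := by
    decide
  rw [esymm, h, Finset.sum_singleton, Fin.prod_univ_three]

/-- The cyclic orbit sum whose substitution `xᵢ ↦ xᵢ²` is `bP`. -/
noncomputable def cyclicSum : S3 := X 0 ^ 2 * X 1 + X 0 * X 2 ^ 2 + X 1 ^ 2 * X 2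

theorem three_eq_zero : (3 : S3) = 0 := by
  rw [← map_ofNat (C : F3 →+* S3) 3, C_eq_zero]
  decide

theorem exists_isSymmetric_of_rename_add_one {f : S3} (hf : rename (fun s : Fin 3 => s + 1) f = f) :
    ∃ p q : S3, p.IsSymmetric ∧ q.IsSymmetric ∧ f = p + q * cyclicSum := by
  have hk : ∀ k : Fin 3, rename (Equiv.addRight k) f = f := by
    have h2 : rename (fun s : Fin 3 => s + 2) f = f := by
      conv_rhs => rw [← hf, ← hf, rename_rename]
      congr 2
      decide
    intro k
    fin_cases k
    · convert rename_id_apply f using 2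
      congr 1
      decide
    · exact hf
    · exact h2
  set f' := rename (Equiv.swap (0 : Fin 3) 1) f with hf'
  have h1 : ∀ e : Equiv.Perm (Fin 3), (rename e f = f ∧ rename e f' = f' ∧ Equiv.Perm.sign e = 1) ∨
      (rename e f = f' ∧ rename e f' = f ∧ Equiv.Perm.sign e = -1) := by
    have h2 : ∀ e : Equiv.Perm (Fin 3), (rename e f = f ∧ Equiv.Perm.sign e = 1) ∨
        (rename e f = f' ∧ Equiv.Perm.sign e = -1) := by
      intro e
      obtain ⟨k, rfl, h⟩ | ⟨k, rfl, h⟩ := perm_fin_three_cases e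
      · exact .inl ⟨hk k, h⟩
      · exact .inr ⟨by rw [Equiv.Perm.coe_mul, ← rename_rename, hk], h⟩
    intro e
    have h3 := h2 (e * Equiv.swap 0 1)
    rw [Equiv.Perm.coe_mul, ← rename_rename, ← hf', Equiv.Perm.sign_mul,
      Equiv.Perm.sign_swap (by decide)] at h3
    obtain ⟨h, hs⟩ | ⟨h, hs⟩ := h2 e <;> simp_all
  have hd : ∀ e : Equiv.Perm (Fin 3),
      rename e (f - f') = (Equiv.Perm.sign e : ℤ) • (f - f') := by
    intro e
    obtain ⟨h, h', hs⟩ | ⟨h, h', hs⟩ := h1 e <;> simp [h, h', hs]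
  obtain ⟨l, hl⟩ : vandermonde3 ∣ f - f' := by
    apply vandermonde3_dvd <;> rw [hd, Equiv.Perm.sign_swap (by decide)] <;> simp
  have hsum : (f + f').IsSymmetric := by
    intro e
    obtain ⟨h, h', -⟩ | ⟨h, h', -⟩ := h1 e <;> simp [h, h', add_comm]
  have hlsymm : l.IsSymmetric := by
    intro e
    have h := hd e
    rw [hl, map_mul, rename_vandermonde3] at h
    refine mul_left_cancel₀ vandermonde3_ne_zero ?_
    obtain h' | h' := Int.units_eq_one_or (Equiv.Perm.sign e) <;> simpa [h'] using h
  refine ⟨-(f + f') + esymm (Fin 3) F3 1 * esymm (Fin 3) F3 2 * l, l, ?_, hlsymm, ?_⟩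
  · exact hsum.neg.add (((esymm_isSymmetric _ _ 1).mul (esymm_isSymmetric _ _ 2)).mul hlsymm)
  · rw [esymm_one_eq, esymm_two_eq, cyclicSum]
    rw [vandermonde3] at hl
    linear_combination -hl + (f - X 0 * X 1 * X 2 * l -
      (X 0 ^ 2 * X 1 + X 0 * X 2 ^ 2 + X 1 ^ 2 * X 2) * l) * three_eq_zero

theorem expand_cyclicSum : expand 2 cyclicSum = bP := by
  simp [cyclicSum, bP]
  ring

theorem expand_mem_range_of_isSymmetric {p : S3} (hp : p.IsSymmetric) :
    expand 2 p ∈ (aeval (R := F3) av).range := by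
  obtain ⟨P, hP⟩ := (esymmAlgEquiv (Fin 3) F3 (n := 3) (by simp)).surjective ⟨p, hp⟩
  have hP' : aeval (fun i : Fin 3 => esymm (Fin 3) F3 (i + 1)) P = p := by
    rw [← esymmAlgHom_apply]
    exact congrArg Subtype.val hP
  have h : (aeval av).comp (aeval (![X 0, X 2 - X 0 ^ 2, X 1 ^ 2] : Fin 3 → S3)) =
      (expand 2).comp (aeval fun i : Fin 3 => esymm (Fin 3) F3 (i + 1)) := by
    ext1 i
    fin_cases i
    · simp [av, a1, Fin.sum_univ_three]
    · simp [av, a1, a3, esymm_two_eq]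
      linear_combination
        -(X 0 ^ 2 * X 1 ^ 2 + X 0 ^ 2 * X 2 ^ 2 + X 1 ^ 2 * X 2 ^ 2) * three_eq_zero
    · simp [av, a2, esymm_three_eq]
      ring
  rw [← hP']
  exact ⟨_, DFunLike.congr_fun h P⟩

theorem sum_signs_eq_expand (f : S3) : ∃ g h : S3,
    ∑ i, aeval (fun s => evenSigns i s • (X s : S3)) f = expand 2 g + a2 * expand 2 h := by
  induction f using MvPolynomial.induction_on' with
  | add p q hp hq =>
    obtain ⟨g, h, e⟩ := hp
    obtain ⟨g', h', e'⟩ := hq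
    refine ⟨g + g', h + h', ?_⟩
    simp only [map_add, Finset.sum_add_distrib, e, e']
    ring
  | monomial m c =>
    simp only [aeval_monomial, Finsupp.prod_fintype _ _ (fun _ => pow_zero _),
      Fin.prod_univ_three, Fin.sum_univ_four]
    generalize m 0 = n₀
    generalize m 1 = n₁
    generalize m 2 = n₂
    obtain ⟨k₀, rfl | rfl⟩ := n₀.even_or_odd' <;> obtain ⟨k₁, rfl | rfl⟩ := n₁.even_or_odd' <;>
      obtain ⟨k₂, rfl | rfl⟩ := n₂.even_or_odd'
    · refine ⟨C c * (X 0 ^ k₀ * X 1 ^ k₁ * X 2 ^ k₂), 0, ?_⟩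
      simp [evenSigns, pow_mul, algebraMap_eq]
      linear_combination C c * (X 0 ^ 2) ^ k₀ * (X 1 ^ 2) ^ k₁ * (X 2 ^ 2) ^ k₂ * three_eq_zero
    on_goal 7 =>
      refine ⟨0, C c * (X 0 ^ k₀ * X 1 ^ k₁ * X 2 ^ k₂), ?_⟩
      simp [evenSigns, pow_mul, pow_succ, algebraMap_eq, a2]
      linear_combination X 0 * X 1 * X 2 * C c * (X 0 * X 0) ^ k₀ * (X 1 * X 1) ^ k₁ *
        (X 2 * X 2) ^ k₂ * three_eq_zero
    all_goals
      refine ⟨0, 0, ?_⟩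
      simp [evenSigns, pow_mul, pow_succ, algebraMap_eq]
      try ring

theorem expand_add_a2_mul_expand_eq_zero {g h : S3} (e : expand 2 g + a2 * expand 2 h = 0) :
    g = 0 ∧ h = 0 := by
  let θ : S3 →ₐ[F3] S3 := aeval (Function.update X 0 (-X 0))
  have hθ (p : S3) : θ (expand 2 p) = expand 2 p := by
    change (θ.comp (expand 2)) p = _
    congr 1
    ext1 i
    fin_cases i <;> simp [θ]
  have hθa : θ a2 = -a2 := by simp [θ, a2]
  have e' := congrArg θ e
  rw [map_add, map_mul, hθ, hθ, hθa, map_zero] at e'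
  have hg : expand 2 g = 0 := by
    linear_combination -e - e' + expand 2 g * three_eq_zero
  rw [hg, zero_add] at e
  refine ⟨(expand_eq_zero two_pos).1 hg, (expand_eq_zero two_pos).1 ?_⟩
  exact (mul_eq_zero.1 e).resolve_left
    (mul_ne_zero (mul_ne_zero (X_ne_zero _) (X_ne_zero _)) (X_ne_zero _))

theorem exists_of_actS_eq {f : S3} (hf : ∀ g : G3, actS g f = f) :
    ∃ p q : S3, aeval av p + aeval av q * bP = f := by
  have hact : ∀ k i, aeval (fun s => evenSigns i s • (X (s + k) : S3)) f = f := by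
    intro k i
    obtain ⟨g, hg⟩ := exists_eq_rep k i
    conv_rhs => rw [← hf g, actS, hg]
    simp
  obtain ⟨g, h, e⟩ := sum_signs_eq_expand f
  have e1 : f = expand 2 g + a2 * expand 2 h := by
    rw [← e]
    have := hact 0
    simp only [add_zero] at this
    simp only [this, Fin.sum_univ_four]
    linear_combination -f * three_eq_zero
  have hr : rename (fun s : Fin 3 => s + 1) f = f := by
    conv_rhs => rw [← hact 1 0]
    congr 1
    ext1 s
    fin_cases s <;> simp [evenSigns]
  have ha : rename (fun s : Fin 3 => s + 1) a2 = a2 := by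
    simp [a2]
    ring
  rw [e1, map_add, map_mul, ha, rename_expand, rename_expand, ← sub_eq_zero] at hr
  obtain ⟨hg, hh⟩ := expand_add_a2_mul_expand_eq_zero
    (g := rename (fun s : Fin 3 => s + 1) g - g) (h := rename (fun s : Fin 3 => s + 1) h - h) (by
      rw [map_sub, map_sub, ← hr]
      ring)
  obtain ⟨p, q, hp, hq, rfl⟩ := exists_isSymmetric_of_rename_add_one (sub_eq_zero.1 hg)
  obtain ⟨p', q', hp', hq', rfl⟩ := exists_isSymmetric_of_rename_add_one (sub_eq_zero.1 hh)
  obtain ⟨P, hP⟩ := expand_mem_range_of_isSymmetric hp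
  obtain ⟨Q, hQ⟩ := expand_mem_range_of_isSymmetric hq
  obtain ⟨P', hP'⟩ := expand_mem_range_of_isSymmetric hp'
  obtain ⟨Q', hQ'⟩ := expand_mem_range_of_isSymmetric hq'
  refine ⟨P + X 1 * P', Q + X 1 * Q', ?_⟩
  simp only [AlgHom.toRingHom_eq_coe, RingHom.coe_coe] at hP hQ hP' hQ'
  rw [e1]
  simp [expand_cyclicSum, ← hP, ← hQ, ← hP', ← hQ', av]
  ring

theorem isIntegral_adjoin_range_av (f : S3) :
    IsIntegral (Algebra.adjoin F3 (Set.range av)) f := by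
  have hX (i : Fin 3) : IsIntegral (Algebra.adjoin F3 (Set.range av)) (X i : S3) := by
    let α (s : Fin 3) : Algebra.adjoin F3 (Set.range av) :=
      ⟨av s, Algebra.subset_adjoin ⟨s, rfl⟩⟩
    refine ⟨Polynomial.X ^ 6 - Polynomial.C (α 0) * Polynomial.X ^ 4 +
      Polynomial.C (α 2 - α 0 ^ 2) * Polynomial.X ^ 2 - Polynomial.C (α 1 ^ 2), ?_, ?_⟩
    · monicity!
    · have h (s : Fin 3) : algebraMap _ S3 (α s) = av s := rfl
      simp only [Polynomial.eval₂_sub, Polynomial.eval₂_add, Polynomial.eval₂_mul,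
        Polynomial.eval₂_X, Polynomial.eval₂_pow, Polynomial.eval₂_C, map_sub, map_pow, h]
      have hi : (X i - X 0) * (X i - X 1) * (X i - X 2) = (0 : S3) := by fin_cases i <;> simp
      simp [av, a1, a2, a3]
      linear_combination (X i + X 0) * (X i + X 1) * (X i + X 2) * hi -
        (X 0 ^ 2 * X 1 ^ 2 + X 0 ^ 2 * X 2 ^ 2 + X 1 ^ 2 * X 2 ^ 2) * X i ^ 2 * three_eq_zero
  induction f using MvPolynomial.induction_on with
  | C c => exact isIntegral_algebraMap (x := algebraMap F3 (Algebra.adjoin F3 (Set.range av)) c)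
  | add p q hp hq => exact hp.add hq
  | mul_X p i hp => exact hp.mul (hX i)

theorem algebraicIndependent_av : AlgebraicIndependent F3 av := by
  have : Algebra.IsIntegral (Algebra.adjoin F3 (Set.range av)) S3 :=
    ⟨isIntegral_adjoin_range_av⟩
  refine (Algebra.IsAlgebraic.isTranscendenceBasis_of_le_trdeg_of_finite F3 av ?_).1
  rw [MvPolynomial.trdeg_of_isDomain]
  simp

theorem eq_zero_of_aeval_add_aeval_mul_bP {p q : S3} (h : aeval av p + aeval av q * bP = 0) :
    p = 0 ∧ q = 0 := by
  have hsymm (s : Fin 3) : rename (Equiv.swap (0 : Fin 3) 1) (av s) = av s := by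
    fin_cases s <;> simp [av, a1, a2, a3, Equiv.swap_apply_def] <;> ring
  have hsymm' (r : S3) : rename (Equiv.swap (0 : Fin 3) 1) (aeval av r) = aeval av r := by
    change ((rename _).comp (aeval av)) r = _
    congr 1
    ext1 s
    simpa using hsymm s
  have hb : bP - rename (Equiv.swap (0 : Fin 3) 1) bP = expand 2 vandermonde3 := by
    simp [bP, vandermonde3, Equiv.swap_apply_def]
    ring
  have h' := congrArg (rename (Equiv.swap (0 : Fin 3) 1)) h
  rw [map_add, map_mul, hsymm', hsymm', map_zero] at h'
  have hq : aeval av q * expand 2 vandermonde3 = 0 := by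
    rw [← hb]
    linear_combination h - h'
  have hq' := (mul_eq_zero.1 hq).resolve_right ((expand_ne_zero two_pos).2 vandermonde3_ne_zero)
  rw [hq', zero_mul, add_zero] at h
  exact ⟨algebraicIndependent_av.eq_zero_of_aeval_eq_zero _ h,
    algebraicIndependent_av.eq_zero_of_aeval_eq_zero _ hq'⟩

/-- An element `f·y₁y₂y₃` of `R` is fixed by `G` iff `f ∈ S^G`, and the `G`-invariant
3-forms form a free `A`-module with basis `{y₁y₂y₃, b·y₁y₂y₃}`: the map
`(p,q) ↦ (p(a₁,a₂,a₃) + q(a₁,a₂,a₃)·b)·y₁y₂y₃` is injective with image exactly the set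
of `G`-fixed elements of `R` of the form `f·y₁y₂y₃`. -/
theorem stmt13 :
    (∀ f : S3,
      (∀ g : G3, actR g (f ⊗ₜ[F3] y123) = f ⊗ₜ[F3] y123) ↔ (∀ g : G3, actS g f = f)) ∧
    Function.Injective Phi13 ∧
    Set.range Phi13 =
      {z : Rf | (∃ f : S3, z = f ⊗ₜ[F3] y123) ∧ ∀ g : G3, actR g z = z} := by
  have hiff (f : S3) : (∀ g : G3, actR g (f ⊗ₜ[F3] y123) = f ⊗ₜ[F3] y123) ↔
      ∀ g : G3, actS g f = f := by
    simp only [actR_tmul_y123]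
    exact forall_congr' fun g => tmul_y123_injective.eq_iff
  refine ⟨hiff, ?_, ?_⟩
  · rintro ⟨p, q⟩ ⟨p', q'⟩ h
    have h' : aeval av p + aeval av q * bP = aeval av p' + aeval av q' * bP :=
      tmul_y123_injective h
    obtain ⟨hp, hq⟩ := eq_zero_of_aeval_add_aeval_mul_bP (p := p - p') (q := q - q') (by
      rw [map_sub, map_sub]
      linear_combination h')
    rw [sub_eq_zero.1 hp, sub_eq_zero.1 hq]
  · ext z
    constructor
    · rintro ⟨⟨p, q⟩, rfl⟩
      refine ⟨⟨_, rfl⟩, (hiff _).2 fun g => ?_⟩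
      have hav (r : S3) : actS g (aeval av r) = aeval av r := by
        change ((actS g).comp (aeval av)) r = _
        congr 1
        ext1 s
        simpa using actS_av g s
      rw [map_add, map_mul, hav, hav, actS_bP]
    · rintro ⟨⟨f, rfl⟩, hf⟩
      obtain ⟨p, q, rfl⟩ := exists_of_actS_eq ((hiff f).1 hf)
      exact ⟨(p, q), rfl⟩
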